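/- There exists a delivery instance that admits an egalitarian optimal allocation which is not non-wasteful, and there exists a delivery instance that admits a non-wasteful allocation which is not egalitarian optimal. -/

import Mathlib

/-- A delivery instance: a finite tree rooted at the hub (encoded by a parent
function `par`; the edges of the tree are the pairs `{v, par v}` for `v ≠ hub`),
positive edge weights (`w v` is the weight of the edge between `v` and its
parent, for `v ≠ hub`), and `n` agents. -/
structure DeliveryInstance where
  V : Type
  fintypeV : Fintype V
  decEqV : DecidableEq V
  hub : V
  par : V → V
  w : V → ℝ
  par_hub : par hub = hub
  reaches_hub : ∀ v : V, ∃ k : ℕ, par^[k] v = hub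
  w_pos : ∀ v : V, v ≠ hub → 0 < w v
  n : ℕ
  n_pos : 0 < n

attribute [instance] DeliveryInstance.fintypeV DeliveryInstance.decEqV

namespace DeliveryInstance

variable (I : DeliveryInstance)

/-- `u` lies on the path from the hub to `v` (equivalently, `u` is a weak
ancestor of `v` in the tree rooted at the hub). -/
def Anc (u v : I.V) : Prop := ∃ k : ℕ, I.par^[k] v = u

/-- A leaf of the tree rooted at the hub: a vertex with no children. -/
def IsLeaf (v : I.V) : Prop := ∀ u : I.V, I.par u = v → u = v

/-- The set of leaves of the topology. -/
def leaves : Set I.V := {v : I.V | I.IsLeaf v}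

/-- The instance is unweighted if every edge has weight 1. -/
def Unweighted : Prop := ∀ v : I.V, v ≠ I.hub → I.w v = 1

/-- The cost of servicing a set `A` of orders: the total weight of the edges of
the tree that lie on the path from the hub to some vertex of `A` (the edge
between `u ≠ hub` and its parent lies on such a path iff `u` is a weak ancestor
of a member of `A`).  In particular `cost ∅ = 0`. -/
noncomputable def cost (A : Set I.V) : ℝ :=
  ∑ u : I.V, Set.indicator {u : I.V | u ≠ I.hub ∧ ∃ v ∈ A, I.Anc u v} I.w u

/-- The bundle of agent `i` under allocation `π`: the set of orders serviced by `i`. -/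
def bundle (π : I.V → Fin I.n) (i : Fin I.n) : Set I.V :=
  {v : I.V | v ≠ I.hub ∧ π v = i}

/-- An allocation is non-wasteful if every order `v` is serviced by an agent
that also services some leaf of the subtree rooted at `v`. -/
def NonWasteful (π : I.V → Fin I.n) : Prop :=
  ∀ v : I.V, v ≠ I.hub → ∃ l : I.V, I.IsLeaf l ∧ I.Anc v l ∧ π l = π v

/-- Total (utilitarian) cost of an allocation. -/
noncomputable def totalCost (π : I.V → Fin I.n) : ℝ :=
  ∑ i : Fin I.n, I.cost (I.bundle π i)

/-- The maximum bundle cost of an allocation. -/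
noncomputable def maxCost (π : I.V → Fin I.n) : ℝ :=
  Finset.univ.sup' ⟨⟨0, I.n_pos⟩, Finset.mem_univ _⟩ fun i : Fin I.n => I.cost (I.bundle π i)

/-- The minimax (MMS) share of the instance: the minimum over all allocations
of the maximum bundle cost. -/
noncomputable def MMSshare : ℝ :=
  Finset.univ.inf' ⟨fun _ => ⟨0, I.n_pos⟩, Finset.mem_univ _⟩
    fun π : I.V → Fin I.n => I.maxCost π

/-- An allocation is MMS if every bundle costs at most the MMS share. -/
def IsMMS (π : I.V → Fin I.n) : Prop :=
  ∀ i : Fin I.n, I.cost (I.bundle π i) ≤ I.MMSshare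

/-- Pareto optimality: no allocation makes every agent weakly better off and
some agent strictly better off. -/
def ParetoOptimal (π : I.V → Fin I.n) : Prop :=
  ¬ ∃ π' : I.V → Fin I.n,
      (∀ i : Fin I.n, I.cost (I.bundle π' i) ≤ I.cost (I.bundle π i)) ∧
      ∃ j : Fin I.n, I.cost (I.bundle π' j) < I.cost (I.bundle π j)

/-- Utilitarian optimality: minimizes the sum of bundle costs. -/
def UtilitarianOptimal (π : I.V → Fin I.n) : Prop :=
  ∀ π' : I.V → Fin I.n, I.totalCost π ≤ I.totalCost π'

/-- Egalitarian optimality: minimizes the maximum bundle cost. -/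
def EgalitarianOptimal (π : I.V → Fin I.n) : Prop :=
  ∀ π' : I.V → Fin I.n, I.maxCost π ≤ I.maxCost π'

/-- Envy-freeness. -/
def EF (π : I.V → Fin I.n) : Prop :=
  ∀ i j : Fin I.n, I.cost (I.bundle π i) ≤ I.cost (I.bundle π j)

/-- Envy-freeness up to one order. -/
def EF1 (π : I.V → Fin I.n) : Prop :=
  ∀ i j : Fin I.n,
    I.bundle π i = ∅ ∨ ∃ v ∈ I.bundle π i, I.cost (I.bundle π i \ {v}) ≤ I.cost (I.bundle π j)

end DeliveryInstance

/-
If the tree is a path, whoever services its far end already traverses every edge, so all allocations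
have the same maximum cost; handing an inner vertex to another agent is wasteful but costs nothing
extra. Conversely, letting one agent service everything wastes nothing, but as soon as the tree has
two leaves, delegating one of them to a second agent lowers the maximum cost.
-/

namespace DeliveryInstance

variable {I : DeliveryInstance} {u v x l l' : I.V} {A B : Set I.V} {π : I.V → Fin I.n}
  {i j : Fin I.n}

theorem Anc.refl (v : I.V) : I.Anc v v := ⟨0, rfl⟩

theorem anc_par (v : I.V) : I.Anc (I.par v) v := ⟨1, rfl⟩

theorem Anc.trans : I.Anc u v → I.Anc v x → I.Anc u x := by
  rintro ⟨j, rfl⟩ ⟨k, rfl⟩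
  exact ⟨j + k, Function.iterate_add_apply ..⟩

theorem Anc.ne_hub (h : I.Anc u v) (hu : u ≠ I.hub) : v ≠ I.hub := by
  rintro rfl
  obtain ⟨k, hk⟩ := h
  exact hu (hk.symm.trans (Function.iterate_fixed I.par_hub k))

theorem IsLeaf.eq_of_anc (hl : I.IsLeaf l) (h : I.Anc l v) : v = l := by
  obtain ⟨k, hk⟩ := h
  induction k generalizing v with
  | zero => exact hk
  | succ k ih => exact hl v (ih hk)

theorem IsLeaf.ne_hub (hl : I.IsLeaf l) (hv : v ≠ l) : l ≠ I.hub := by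
  rintro rfl
  exact hv (hl.eq_of_anc (I.reaches_hub v))

/-- The depth of a vertex: the number of edges on its path to the hub. A deepest descendant of
a vertex is a leaf. -/
def depth (v : I.V) : ℕ := Nat.find (I.reaches_hub v)

theorem depth_eq_depth_par_add_one (hv : v ≠ I.hub) : depth v = depth (I.par v) + 1 :=
  Nat.find_comp_succ (I.reaches_hub v) (I.reaches_hub (I.par v)) hv

theorem exists_isLeaf_anc (v : I.V) : ∃ l, I.IsLeaf l ∧ I.Anc v l := by
  obtain ⟨l, hvl, hmax⟩ :=
    Set.exists_max_image {u | I.Anc v u} depth (Set.toFinite _) ⟨v, Anc.refl v⟩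
  refine ⟨l, ?_, hvl⟩
  rintro u rfl
  by_cases huh : u = I.hub
  · rw [huh, I.par_hub]
  · have hle : depth u ≤ depth (I.par u) := hmax u (hvl.trans (anc_par u))
    have hdepth := depth_eq_depth_par_add_one huh
    omega

open Classical in
/-- The edges traversed when servicing `A`, each named by its endpoint farther from the hub. It
turns the sum of indicators in `cost` into a sum over a finset. -/
noncomputable def route (A : Set I.V) : Finset I.V :=
  {u | u ≠ I.hub ∧ ∃ v ∈ A, I.Anc u v}

theorem mem_route : u ∈ route A ↔ u ≠ I.hub ∧ ∃ v ∈ A, I.Anc u v := by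
  simp only [route, Finset.mem_filter_univ]

theorem w_pos_of_mem_route (hu : u ∈ route A) : 0 < I.w u := I.w_pos u (mem_route.1 hu).1

theorem cost_eq_sum_route (A : Set I.V) : I.cost A = ∑ u ∈ route A, I.w u := by
  classical
  simp only [cost, route, Finset.sum_filter, Set.indicator_apply, Set.mem_ofPred_eq]

theorem route_subset_route (h : ∀ a ∈ A, ∃ b ∈ B, I.Anc a b) : route A ⊆ route B := by
  intro u hu
  obtain ⟨huh, a, ha, hua⟩ := mem_route.1 hu
  obtain ⟨b, hb, hab⟩ := h a ha
  exact mem_route.2 ⟨huh, b, hb, hua.trans hab⟩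

theorem cost_le_cost_of_forall_exists_anc (h : ∀ a ∈ A, ∃ b ∈ B, I.Anc a b) :
    I.cost A ≤ I.cost B := by
  rw [cost_eq_sum_route, cost_eq_sum_route]
  exact Finset.sum_le_sum_of_subset_of_nonneg (route_subset_route h)
    fun u hu _ => (w_pos_of_mem_route hu).le

theorem IsLeaf.mem_route_iff (hl : I.IsLeaf l) : l ∈ route A ↔ l ≠ I.hub ∧ l ∈ A := by
  rw [mem_route]
  refine and_congr_right fun _ => ⟨?_, fun hlA => ⟨l, hlA, Anc.refl l⟩⟩
  rintro ⟨v, hv, hlv⟩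
  exact hl.eq_of_anc hlv ▸ hv

theorem cost_lt_cost_of_subset_of_isLeaf (hAB : A ⊆ B) (hl : I.IsLeaf l) (hlh : l ≠ I.hub)
    (hlA : l ∉ A) (hlB : l ∈ B) : I.cost A < I.cost B := by
  have hlB' : l ∈ route B := hl.mem_route_iff.2 ⟨hlh, hlB⟩
  have hlA' : l ∉ route A := fun h => hlA (hl.mem_route_iff.1 h).2
  rw [cost_eq_sum_route, cost_eq_sum_route]
  exact Finset.sum_lt_sum_of_subset (route_subset_route fun a ha => ⟨a, hAB ha, Anc.refl a⟩)
    hlB' hlA' (w_pos_of_mem_route hlB') fun u hu _ => (w_pos_of_mem_route hu).le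

theorem cost_bundle_le_maxCost (π : I.V → Fin I.n) (i : Fin I.n) :
    I.cost (I.bundle π i) ≤ I.maxCost π :=
  Finset.le_sup' (fun i => I.cost (I.bundle π i)) (Finset.mem_univ i)

theorem egalitarianOptimal_of_forall_anc (h : ∀ u, I.Anc u l) (π : I.V → Fin I.n) :
    I.EgalitarianOptimal π := by
  intro ρ
  refine Finset.sup'_le _ _ fun i _ => ?_
  calc I.cost (I.bundle π i)
      ≤ I.cost (I.bundle ρ (ρ l)) :=
        cost_le_cost_of_forall_exists_anc fun u hu => ⟨l, ⟨(h u).ne_hub hu.1, rfl⟩, h u⟩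
    _ ≤ I.maxCost ρ := cost_bundle_le_maxCost ρ (ρ l)

theorem NonWasteful.eq_of_forall_anc (hπ : I.NonWasteful π) (h : ∀ u, I.Anc u l)
    (hv : v ≠ I.hub) : π v = π l := by
  obtain ⟨m, hm, -, hmv⟩ := hπ v hv
  rw [← hmv, hm.eq_of_anc (h m)]

theorem nonWasteful_const (i : Fin I.n) : I.NonWasteful fun _ => i := fun v _ =>
  let ⟨l, hl, hvl⟩ := exists_isLeaf_anc v
  ⟨l, hl, hvl, rfl⟩

theorem not_egalitarianOptimal_const (hij : i ≠ j) (hl : I.IsLeaf l) (hl' : I.IsLeaf l')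
    (hll' : l ≠ l') : ¬ I.EgalitarianOptimal fun _ => i := by
  let ρ : I.V → Fin I.n := Function.update (fun _ => i) l' j
  have hρl : ρ l = i := Function.update_of_ne hll' ..
  have hρl' : ρ l' = j := Function.update_self ..
  have hsub (k : Fin I.n) : I.bundle ρ k ⊆ I.bundle (fun _ => i) i := fun v hv => ⟨hv.1, rfl⟩
  have hlt (k : Fin I.n) : I.cost (I.bundle ρ k) < I.cost (I.bundle (fun _ => i) i) := by
    by_cases hk : k = j
    · have hlh : l ≠ I.hub := hl.ne_hub hll'.symm
      have hmiss : l ∉ I.bundle ρ k := fun hmem => hij (hρl.symm.trans (hmem.2.trans hk))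
      exact cost_lt_cost_of_subset_of_isLeaf (hsub k) hl hlh hmiss ⟨hlh, rfl⟩
    · have hlh' : l' ≠ I.hub := hl'.ne_hub hll'
      have hmiss : l' ∉ I.bundle ρ k := fun hmem => hk (hmem.2.symm.trans hρl')
      exact cost_lt_cost_of_subset_of_isLeaf (hsub k) hl' hlh' hmiss ⟨hlh', rfl⟩
  intro hopt
  refine (hopt ρ).not_gt ?_
  calc I.maxCost ρ
      < I.cost (I.bundle (fun _ => i) i) := (Finset.sup'_lt_iff _).2 fun k _ => hlt k
    _ ≤ I.maxCost fun _ => i := cost_bundle_le_maxCost _ i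

/-- The path `0 - 1 - 2` with hub `0`, unit weights and two agents. -/
def path : DeliveryInstance where
  V := Fin 3
  fintypeV := inferInstance
  decEqV := inferInstance
  hub := 0
  par := ![0, 0, 1]
  w _ := 1
  par_hub := rfl
  reaches_hub v := ⟨2, by decide +revert⟩
  w_pos _ _ := one_pos
  n := 2
  n_pos := two_pos

theorem anc_path_two : ∀ u : path.V, path.Anc u (2 : Fin 3) :=
  show ∀ u : Fin 3, path.Anc u (2 : Fin 3) from fun
    | 0 => ⟨2, rfl⟩
    | 1 => ⟨1, rfl⟩
    | 2 => ⟨0, rfl⟩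

/-- The star with hub `0` and leaves `1` and `2`, with unit weights and two agents. -/
def star : DeliveryInstance where
  V := Fin 3
  fintypeV := inferInstance
  decEqV := inferInstance
  hub := 0
  par _ := 0
  w _ := 1
  par_hub := rfl
  reaches_hub _ := ⟨1, rfl⟩
  w_pos _ _ := one_pos
  n := 2
  n_pos := two_pos

theorem isLeaf_star {v : star.V} (hv : v ≠ star.hub) : star.IsLeaf v :=
  fun _ hu => absurd hu.symm hv

end DeliveryInstance

/-- There is an instance with an egalitarian optimal
allocation that is not non-wasteful, and an instance with a non-wasteful
allocation that is not egalitarian optimal. -/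
theorem stmt6 :
    (∃ (I : DeliveryInstance) (π : I.V → Fin I.n),
      I.EgalitarianOptimal π ∧ ¬ I.NonWasteful π) ∧
    (∃ (I : DeliveryInstance) (π : I.V → Fin I.n),
      I.NonWasteful π ∧ ¬ I.EgalitarianOptimal π) := by
  constructor
  · let π : Fin 3 → Fin 2 := ![0, 0, 1]
    have hπ : π 1 ≠ π 2 := by decide
    have h₁ : (1 : Fin 3) ≠ 0 := by decide
    exact ⟨.path, π,
      DeliveryInstance.egalitarianOptimal_of_forall_anc DeliveryInstance.anc_path_two π,
      fun h => hπ (h.eq_of_forall_anc DeliveryInstance.anc_path_two h₁)⟩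
  · have h₁ : (1 : Fin 3) ≠ 0 := by decide
    have h₂ : (2 : Fin 3) ≠ 0 := by decide
    have h₁₂ : (1 : Fin 3) ≠ 2 := by decide
    exact ⟨.star, fun _ => (0 : Fin 2), DeliveryInstance.nonWasteful_const _,
      DeliveryInstance.not_egalitarianOptimal_const (zero_ne_one : (0 : Fin 2) ≠ 1)
        (DeliveryInstance.isLeaf_star h₁) (DeliveryInstance.isLeaf_star h₂) h₁₂⟩
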